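/- arXiv:1607.07911 — 4 statements merged into one kernel-verified Lean document; each statement's English description precedes it below -/
import Mathlib

section
/- Let n be odd and define π_1(i) = i, π_2(i) = n+1−(i+1)/2 for odd i and n+1−(i/2+(n+1)/2) for even i, π_3(i) = (i+1)/2 for odd i and i/2+(n+1)/2 for even i, and π_4(i) = n+1−i, for i ∈ {1,…,n}. Then for every i ∈ {1,…,n}, φ_1^i(π_1,…,π_4) = φ_2^i(π_1,…,π_4) = 3n + 2. -/
/-- `π₁(i) = i`. -/
def pi1 (i : ℕ) : ℕ := i

/-- `π₂(i) = n+1−(i+1)/2` for odd `i` and `n+1−(i/2+(n+1)/2)` for even `i`. -/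
def pi2 (n i : ℕ) : ℕ := if Odd i then n + 1 - (i + 1) / 2 else n + 1 - (i / 2 + (n + 1) / 2)

/-- `π₃(i) = (i+1)/2` for odd `i` and `i/2+(n+1)/2` for even `i`. -/
def pi3 (n i : ℕ) : ℕ := if Odd i then (i + 1) / 2 else i / 2 + (n + 1) / 2

/-- `π₄(i) = n+1−i`. -/
def pi4 (n i : ℕ) : ℕ := n + 1 - i

/-- For odd `n` and the permutations `π₁, π₂, π₃, π₄` above, for every `i ∈ {1, …, n}` we have
`φ₁^i(π₁,…,π₄) = φ₂^i(π₁,…,π₄) = 3n + 2` (in `φ₁^i` the index `i+1` is taken mod `n`, i.e. it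
is `1` when `i = n`). -/
theorem phi_constant (n : ℕ) (hodd : Odd n) :
    ∀ i ∈ Set.Icc 1 n,
      pi1 i + pi1 (if i = n then 1 else i + 1) + pi2 n i + pi2 n (if i = n then 1 else i + 1)
          + pi4 n i + (n + 1) / 2 - 1 = 3 * n + 2 ∧
      pi1 i + 3 * pi2 n i + pi3 n i + (if Even i then n else 0) = 3 * n + 2 := by
  rintro i ⟨hi1, hin⟩
  simp only [pi1, pi2, pi3, pi4, Nat.odd_iff, Nat.even_iff] at *
  split_ifs <;> omega
end

section
/- Let k be an odd positive integer and define f_1, f_2, f_3 : {1,…,k} → ℕ by f_1(j) = 1 + j; f_2(j) = 3(k+1)/2 + j for 1 ≤ j ≤ (k−1)/2 and f_2(j) = (k+3)/2 + j for (k+1)/2 ≤ j ≤ k; f_3(j) = 3k + 2 − 2j for 1 ≤ j ≤ (k−1)/2 and f_3(j) = 4k + 2 − 2j for (k+1)/2 ≤ j ≤ k. Then the 3k values f_i(j) (i ∈ {1,2,3}, j ∈ {1,…,k}) together with the value 1 are pairwise distinct and their set equals {1,…,3k+1}, and moreover f_1(j) + f_2(j) + f_3(j) = 9(k+1)/2 for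 every j ∈ {1,…,k}. -/
/-!
Write `k = 2m + 1`. Every value is then affine in `m` and `j`, and the values of the three
functions, split by branch, tile `{2, …, 6m + 4}`:

* `f₁` fills `[2, 2m + 2]`;
* `f₂` fills `[3m + 4, 4m + 3]` on `j ≤ m` and `[2m + 3, 3m + 3]` on `j > m`;
* `f₃` takes the odd values of `[4m + 5, 6m + 3]` on `j ≤ m` and the even values of
  `[4m + 4, 6m + 4]` on `j > m`.

Each branch is injective in `j` and these five sets are disjoint, so the map is a bijection.
-/

/-- `f₁(j) = 1 + j`. -/
def fOdd1 (j : ℕ) : ℕ := 1 + j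

/-- `f₂(j) = 3(k+1)/2 + j` for `1 ≤ j ≤ (k−1)/2` and `(k+3)/2 + j` for `(k+1)/2 ≤ j ≤ k`. -/
def fOdd2 (k j : ℕ) : ℕ := if j ≤ (k - 1) / 2 then 3 * (k + 1) / 2 + j else (k + 3) / 2 + j

/-- `f₃(j) = 3k + 2 − 2j` for `1 ≤ j ≤ (k−1)/2` and `4k + 2 − 2j` for `(k+1)/2 ≤ j ≤ k`. -/
def fOdd3 (k j : ℕ) : ℕ := if j ≤ (k - 1) / 2 then 3 * k + 2 - 2 * j else 4 * k + 2 - 2 * j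

/-- For odd positive `k`, the `3k` values `fᵢ(j)` (`i ∈ {1,2,3}`, `j ∈ {1,…,k}`) together with
the value `1` are pairwise distinct and fill `{1, …, 3k+1}` (equivalently, `(i,j) ↦ fᵢ(j)` is a
bijection from `{1,2,3} × {1,…,k}` onto `{1,…,3k+1} ∖ {1}`), and
`f₁(j) + f₂(j) + f₃(j) = 9(k+1)/2` for every `j ∈ {1,…,k}`. -/
theorem fOdd_bijOn_and_sum (k : ℕ) (hk : 0 < k) (hodd : Odd k) :
    Set.BijOn
      (fun p : ℕ × ℕ => if p.1 = 1 then fOdd1 p.2 else if p.1 = 2 then fOdd2 k p.2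
        else fOdd3 k p.2)
      (Set.Icc 1 3 ×ˢ Set.Icc 1 k) (Set.Icc 1 (3 * k + 1) \ {1}) ∧
    ∀ j ∈ Set.Icc 1 k, fOdd1 j + fOdd2 k j + fOdd3 k j = 9 * (k + 1) / 2 := by
  obtain ⟨m, rfl⟩ := hodd
  -- Replacing the truncated halves by exact values makes every remaining claim linear in `m`, `j`.
  have h1 : (2 * m + 1 - 1) / 2 = m := by omega
  have h2 : 3 * (2 * m + 1 + 1) / 2 = 3 * m + 3 := by omega
  have h3 : (2 * m + 1 + 3) / 2 = m + 2 := by omega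
  simp only [fOdd1, fOdd2, fOdd3, h1, h2, h3]
  refine ⟨⟨?_, ?_, ?_⟩, ?_⟩
  · rintro ⟨i, j⟩ h
    simp only [Set.mem_prod, Set.mem_Icc, Set.mem_sdiff, Set.mem_singleton_iff] at h ⊢
    split_ifs <;> omega
  · rintro ⟨i, j⟩ h ⟨i', j'⟩ h' heq
    simp only [Set.mem_prod, Set.mem_Icc] at h h'
    simp only [Prod.mk.injEq]
    dsimp only at heq
    split_ifs at heq <;> omega
  · rintro y hy
    simp only [Set.mem_sdiff, Set.mem_Icc, Set.mem_singleton_iff] at hy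
    simp only [Set.mem_image, Set.mem_prod, Set.mem_Icc, Prod.exists]
    -- The preimage of `y` is found by inverting the branch whose range contains `y`.
    by_cases c1 : y ≤ 2 * m + 2
    · refine ⟨1, y - 1, by omega, ?_⟩
      split_ifs <;> omega
    by_cases c2 : y ≤ 3 * m + 3
    · refine ⟨2, y - (m + 2), by omega, ?_⟩
      split_ifs <;> omega
    by_cases c3 : y ≤ 4 * m + 3
    · refine ⟨2, y - (3 * m + 3), by omega, ?_⟩
      split_ifs <;> omega
    by_cases c4 : y % 2 = 1
    · refine ⟨3, (6 * m + 5 - y) / 2, by omega, ?_⟩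
      split_ifs <;> omega
    · refine ⟨3, (8 * m + 6 - y) / 2, by omega, ?_⟩
      split_ifs <;> omega
  · intro j hj
    simp only [Set.mem_Icc] at hj
    split_ifs <;> omega
end

section
/- Let k be an even positive integer and define f_1, f_2, f_3 : {1,…,k} → ℕ by f_1(j) = j for 1 ≤ j ≤ k/2 and f_1(j) = j + 1 for k/2+1 ≤ j ≤ k; f_2(j) = 3k/2 + 1 + j for 1 ≤ j ≤ k/2 and f_2(j) = k/2 + 1 + j for k/2+1 ≤ j ≤ k; f_3(j) = 3(k+1) − 2j for 1 ≤ j ≤ k/2 and f_3(j) = 4k + 2 − 2j for k/2+1 ≤ j ≤ k. Then the 3k values f_i(j) (i ∈ {1,2,3}, j ∈ {1,…,k}) together with the value k/2 + 1 are pairwise distinct and their set equals {1,…,3k+1}, and moreover f_1(j) + f_2(j) + f_3(j) = (9k+8)/2 for every j ∈ {1,…,k}. -/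
/-!
Write `k = 2 * m`. The six branches of the three functions have as images
`[1, m]` and `[m + 2, 2m + 1]` for `f₁`, `[3m + 2, 4m + 1]` and `[2m + 2, 3m + 1]` for `f₂`, and the
odd and the even numbers of `[4m + 2, 6m + 1]` for `f₃`. These partition `[1, 6m + 1]` without
`m + 1`, and each branch is injective. In the sum, the coefficients `1`, `1`, `-2` of `j` cancel and
both branches leave the constant `9m + 4`.
-/

/-- `f₁(j) = j` for `1 ≤ j ≤ k/2` and `j + 1` for `k/2+1 ≤ j ≤ k`. -/
def fEven1 (k j : ℕ) : ℕ := if j ≤ k / 2 then j else j + 1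

/-- `f₂(j) = 3k/2 + 1 + j` for `1 ≤ j ≤ k/2` and `k/2 + 1 + j` for `k/2+1 ≤ j ≤ k`. -/
def fEven2 (k j : ℕ) : ℕ := if j ≤ k / 2 then 3 * k / 2 + 1 + j else k / 2 + 1 + j

/-- `f₃(j) = 3(k+1) − 2j` for `1 ≤ j ≤ k/2` and `4k + 2 − 2j` for `k/2+1 ≤ j ≤ k`. -/
def fEven3 (k j : ℕ) : ℕ := if j ≤ k / 2 then 3 * (k + 1) - 2 * j else 4 * k + 2 - 2 * j

/-- For even positive `k`, the `3k` values `fᵢ(j)` (`i ∈ {1,2,3}`, `j ∈ {1,…,k}`) together with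
the value `k/2 + 1` are pairwise distinct and fill `{1, …, 3k+1}` (equivalently,
`(i,j) ↦ fᵢ(j)` is a bijection from `{1,2,3} × {1,…,k}` onto `{1,…,3k+1} ∖ {k/2+1}`), and
`f₁(j) + f₂(j) + f₃(j) = (9k+8)/2` for every `j ∈ {1,…,k}`. -/
theorem fEven_bijOn_and_sum (k : ℕ) (hk : 0 < k) (heven : Even k) :
    Set.BijOn
      (fun p : ℕ × ℕ => if p.1 = 1 then fEven1 k p.2 else if p.1 = 2 then fEven2 k p.2
        else fEven3 k p.2)
      (Set.Icc 1 3 ×ˢ Set.Icc 1 k) (Set.Icc 1 (3 * k + 1) \ {k / 2 + 1}) ∧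
    ∀ j ∈ Set.Icc 1 k, fEven1 k j + fEven2 k j + fEven3 k j = (9 * k + 8) / 2 := by
  obtain ⟨m, rfl⟩ := heven
  have h1 : (m + m) / 2 = m := by omega
  have h2 : 3 * (m + m) / 2 = 3 * m := by omega
  simp only [fEven1, fEven2, fEven3, h1, h2]
  refine ⟨⟨?_, ?_, ?_⟩, ?_⟩
  · rintro ⟨i, j⟩ ⟨⟨hi1, hi3⟩, hj1, hjk⟩
    simp only [Set.mem_sdiff, Set.mem_Icc, Set.mem_singleton_iff] at *
    split_ifs <;> omega
  · rintro ⟨i, j⟩ ⟨⟨hi1, hi3⟩, hj1, hjk⟩ ⟨i', j'⟩ ⟨⟨hi1', hi3'⟩, hj1', hjk'⟩ h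
    simp only [Prod.mk.injEq] at *
    split_ifs at h <;> omega
  · rintro n ⟨⟨hn1, hn2⟩, hn⟩
    simp only [Set.mem_singleton_iff] at hn
    -- Spelling the preimage out in coordinates leaves goals of linear arithmetic only.
    suffices H : ∃ i j : ℕ, ((1 ≤ i ∧ i ≤ 3) ∧ 1 ≤ j ∧ j ≤ m + m) ∧
        (if i = 1 then (if j ≤ m then j else j + 1)
          else if i = 2 then (if j ≤ m then 3 * m + 1 + j else m + 1 + j)
          else (if j ≤ m then 3 * (m + m + 1) - 2 * j else 4 * (m + m) + 2 - 2 * j)) = n by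
      obtain ⟨i, j, hij, hv⟩ := H
      exact ⟨(i, j), hij, hv⟩
    have hcases : n ≤ m ∨ (m + 2 ≤ n ∧ n ≤ 2 * m + 1) ∨ (2 * m + 2 ≤ n ∧ n ≤ 3 * m + 1) ∨
        (3 * m + 2 ≤ n ∧ n ≤ 4 * m + 1) ∨ (4 * m + 2 ≤ n ∧ n % 2 = 1) ∨
        (4 * m + 2 ≤ n ∧ n % 2 = 0) := by omega
    rcases hcases with h | h | h | h | h | h
    · exact ⟨1, n, by omega, by split_ifs <;> omega⟩
    · exact ⟨1, n - 1, by omega, by split_ifs <;> omega⟩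
    · exact ⟨2, n - (m + 1), by omega, by split_ifs <;> omega⟩
    · exact ⟨2, n - (3 * m + 1), by omega, by split_ifs <;> omega⟩
    · exact ⟨3, (6 * m + 3 - n) / 2, by omega, by split_ifs <;> omega⟩
    · exact ⟨3, (8 * m + 2 - n) / 2, by omega, by split_ifs <;> omega⟩
  · rintro j ⟨hj1, hjk⟩
    split_ifs <;> omega
end

section
/- Let k ≥ 2 be an integer and define w : {1,…,k} → ℕ by w(i) = (i+1)/2 if i is odd and w(i) = ⌈k/2⌉ + i/2 if i is even. Then w is a bijection from {1,…,k} onto {1,…,k}, and for every i ∈ {1,…,k−1}, w(i) + w(i+1) − i = ⌈k/2⌉ + 1. -/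
/-- `w(i) = (i+1)/2` for odd `i` and `⌈k/2⌉ + i/2` for even `i` (note `⌈k/2⌉ = (k+1)/2`). -/
def wPath (k i : ℕ) : ℕ := if Odd i then (i + 1) / 2 else (k + 1) / 2 + i / 2

/-!
The odd numbers of `{1,…,k}` are sent in increasing order onto `{1,…,⌈k/2⌉}`, and the even ones onto
`{⌈k/2⌉+1,…,k}`; the inverse is `j ↦ 2j - 1` on the first block and `j ↦ 2(j - ⌈k/2⌉)` on the
second. Two consecutive indices have opposite parity, so they contribute `⌈k/2⌉` exactly once, and
their halves add up to `i + 1`.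
-/

/-- For `k ≥ 2`, the map `w` is a bijection of `{1,…,k}` and
`w(i) + w(i+1) − i = ⌈k/2⌉ + 1` for every `i ∈ {1,…,k−1}`. -/
theorem wPath_bijOn_and_sum (k : ℕ) (hk : 2 ≤ k) :
    Set.BijOn (wPath k) (Set.Icc 1 k) (Set.Icc 1 k) ∧
    ∀ i ∈ Set.Icc 1 (k - 1), wPath k i + wPath k (i + 1) - i = (k + 1) / 2 + 1 := by
  refine ⟨⟨?_, ?_, ?_⟩, ?_⟩
  · rintro i ⟨h1, h2⟩
    simp only [wPath, Nat.odd_iff, Set.mem_Icc]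
    split_ifs <;> omega
  · rintro i ⟨hi1, hi2⟩ j ⟨hj1, hj2⟩ h
    simp only [wPath, Nat.odd_iff] at h
    split_ifs at h <;> omega
  · rintro j ⟨h1, h2⟩
    by_cases hj : j ≤ (k + 1) / 2
    · refine ⟨2 * j - 1, ⟨by omega, by omega⟩, ?_⟩
      simp only [wPath, Nat.odd_iff]
      split_ifs <;> omega
    · refine ⟨2 * (j - (k + 1) / 2), ⟨by omega, by omega⟩, ?_⟩
      simp only [wPath, Nat.odd_iff]
      split_ifs <;> omega
  · rintro i ⟨h1, h2⟩
    simp only [wPath, Nat.odd_iff]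
    split_ifs <;> omega
end
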